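/- For every natural number n, the function μ_n satisfies μ_n''(z) − 2(z + 4z/(1+2z²))·μ_n'(z) + 2n·μ_n(z) = 0 for all z ∈ ℂ with 1 + 2z² ≠ 0. -/

import Mathlib

/-- Even coefficients c_{2k}(n) of the generalized power series. -/
noncomputable def ceven (n k : ℕ) : ℂ :=
  if k = 0 then 1
  else if k = 1 then -(n : ℂ)
  else (-1) ^ k * 2 ^ k * (n : ℂ) * ((n : ℂ) - ((2 * (k : ℂ) - 1) ^ 2 + 1)) *
    (∏ j ∈ Finset.Icc 1 (k - 2), ((n : ℂ) - 2 * (1 + (j : ℂ)))) /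
      (Nat.factorial (2 * k) : ℂ)

/-- Odd coefficients: `codd n k` is c_{2k-1}(n), for k ≥ 1. -/
noncomputable def codd (n k : ℕ) : ℂ :=
  if k ≤ 1 then 1
  else (-1) ^ (k + 1) * 2 ^ (k - 1) * ((n : ℂ) - ((2 * ((k : ℂ) - 1)) ^ 2 + 1)) *
    (∏ j ∈ Finset.Icc 1 (k - 2), ((n : ℂ) - (2 * (1 + (j : ℂ)) - 1))) /
      (Nat.factorial (2 * k - 1) : ℂ)

/-- μₙ(z) = Σ_{k≥0} c_{2k}(n)·z^{2k}. -/
noncomputable def muF (n : ℕ) (z : ℂ) : ℂ := ∑' k : ℕ, ceven n k * z ^ (2 * k)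

/-- νₙ(z) = Σ_{k≥1} c_{2k-1}(n)·z^{2k-1}. -/
noncomputable def nuF (n : ℕ) (z : ℂ) : ℂ := ∑' k : ℕ, codd n (k + 1) * z ^ (2 * k + 1)

/-- βₙ = μₙ + νₙ. -/
noncomputable def betaF (n : ℕ) (z : ℂ) : ℂ := muF n z + nuF n z

/-!
With `w = z²`, `μ(z) = F(w)` for `F(w) = ∑ c_{2k} wᵏ`, and after multiplication by `1 + 2z²` the
equation becomes `(1 + 2w) (2w F'' + F' - 2w F' + n F) = 8w F'`, which holds as soon as `F` is
entire and its coefficients satisfy a three-term recurrence. Both facts come from the factorization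
of `c_{2k}`, for `k ≥ 2`, into a quadratic polynomial in `k` and a weight that satisfies a two-term
recurrence with ratio tending to `0`.
-/

open Filter Topology Finset

/-- The coefficient sequences of the entire functions: those whose power series converges at every
point of `ℂ`. -/
def IsEntireSeq (a : ℕ → ℂ) : Prop :=
  ∀ w : ℂ, Summable fun k ↦ a k * w ^ k

/-- The sum of the power series with coefficients `a`. -/
noncomputable def powerSum (a : ℕ → ℂ) (w : ℂ) : ℂ :=
  ∑' k, a k * w ^ k

/-- The coefficients of the termwise derivative of the power series with coefficients `a`. -/
def derivSeq (a : ℕ → ℂ) (k : ℕ) : ℂ :=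
  (k + 1) * a (k + 1)

theorem hasSum_mul_pow_of_hasSum_succ {R : Type*} [CommRing R] [TopologicalSpace R]
    [IsTopologicalRing R] {a : ℕ → R} {w s : R} (ha : a 0 = 0)
    (hs : HasSum (fun k ↦ a (k + 1) * w ^ k) s) : HasSum (fun k ↦ a k * w ^ k) (w * s) := by
  rw [← hasSum_nat_add_iff' 1]
  have hterm (k : ℕ) : a (k + 1) * w ^ (k + 1) = w * (a (k + 1) * w ^ k) := by ring
  simpa [ha, hterm] using hs.mul_left w

theorem isEntireSeq_of_tendsto_ratio {a ρ : ℕ → ℂ} (ha : ∀ k, a (k + 1) = ρ k * a k)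
    (hρ : Tendsto ρ atTop (𝓝 0)) : IsEntireSeq a := by
  intro w
  have hlim : Tendsto (fun k ↦ ‖ρ k * w‖) atTop (𝓝 0) := by
    simpa using (hρ.mul_const w).norm
  refine summable_of_ratio_norm_eventually_le (r := 1 / 2) (by norm_num) ?_
  filter_upwards [hlim.eventually_le_const (show (0 : ℝ) < 1 / 2 by norm_num)] with k hk
  calc ‖a (k + 1) * w ^ (k + 1)‖ = ‖ρ k * w‖ * ‖a k * w ^ k‖ := by
        rw [← norm_mul, ha]
        ring_nf
    _ ≤ 1 / 2 * ‖a k * w ^ k‖ := by gcongr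

theorem norm_mul_pow_le_of_norm_le (c : ℂ) {r : ℝ} {w : ℂ} (hw : ‖w‖ ≤ r) (k : ℕ) :
    ‖c * w ^ k‖ ≤ ‖c * (r : ℂ) ^ k‖ := by
  have hr : ‖w‖ ≤ ‖(r : ℂ)‖ := by simpa using hw.trans (le_abs_self r)
  simp only [norm_mul, norm_pow]
  gcongr

namespace IsEntireSeq

variable {a b : ℕ → ℂ}

theorem hasSum (ha : IsEntireSeq a) (w : ℂ) : HasSum (fun k ↦ a k * w ^ k) (powerSum a w) :=
  (ha w).hasSum

protected theorem sub (ha : IsEntireSeq a) (hb : IsEntireSeq b) : IsEntireSeq fun k ↦ a k - b k :=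
  fun w ↦ by simpa only [sub_mul] using (ha w).sub (hb w)

theorem const_mul (c : ℂ) (ha : IsEntireSeq a) : IsEntireSeq fun k ↦ c * a k :=
  fun w ↦ by simpa only [mul_assoc] using (ha w).mul_left c

theorem of_succ (ha : IsEntireSeq fun k ↦ a (k + 1)) : IsEntireSeq a := by
  intro w
  rw [← summable_nat_add_iff 1]
  simpa only [pow_succ, mul_assoc] using (ha w).mul_right w

theorem differentiable (ha : IsEntireSeq a) : Differentiable ℂ (powerSum a) := by
  intro z
  have hball : z ∈ Metric.ball (0 : ℂ) (‖z‖ + 1) := by simp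
  refine (Complex.differentiableOn_tsum_of_summable_norm (ha (‖z‖ + 1 : ℝ)).norm
    (fun k ↦ by fun_prop) Metric.isOpen_ball fun k w hw ↦ ?_).differentiableAt
    (Metric.isOpen_ball.mem_nhds hball)
  exact norm_mul_pow_le_of_norm_le (a k) (mem_ball_zero_iff.1 hw).le k

theorem hasSum_derivSeq (ha : IsEntireSeq a) (z : ℂ) :
    HasSum (fun k ↦ derivSeq a k * z ^ k) (deriv (powerSum a) z) := by
  have hball : z ∈ Metric.ball (0 : ℂ) (‖z‖ + 1) := by simp
  have hsum := Complex.hasSum_deriv_of_summable_norm (ha (‖z‖ + 1 : ℝ)).norm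
    (fun k ↦ by fun_prop) Metric.isOpen_ball
    (fun k w hw ↦ norm_mul_pow_le_of_norm_le (a k) (mem_ball_zero_iff.1 hw).le k) hball
  rw [← hasSum_nat_add_iff' 1] at hsum
  have hterm (k : ℕ) : derivSeq a k * z ^ k = a (k + 1) * ((k + 1) * z ^ k) := by
    rw [derivSeq]
    ring
  change HasSum _ (deriv (fun w ↦ ∑' k, a k * w ^ k) z)
  simpa [hterm] using hsum

protected theorem derivSeq (ha : IsEntireSeq a) : IsEntireSeq (derivSeq a) :=
  fun z ↦ (ha.hasSum_derivSeq z).summable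

theorem hasDerivAt (ha : IsEntireSeq a) (z : ℂ) :
    HasDerivAt (powerSum a) (powerSum (derivSeq a) z) z := by
  rw [powerSum, (ha.hasSum_derivSeq z).tsum_eq]
  exact (ha.differentiable z).hasDerivAt

theorem hasSum_natCast_mul (ha : IsEntireSeq a) (w : ℂ) :
    HasSum (fun k : ℕ ↦ k * a k * w ^ k) (w * powerSum (derivSeq a) w) :=
  hasSum_mul_pow_of_hasSum_succ (by simp) <| by
    simpa only [derivSeq, Nat.cast_add_one] using ha.derivSeq.hasSum w

theorem hasSum_add_one_mul_two_mul_add_one (ha : IsEntireSeq a) (w : ℂ) :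
    HasSum (fun k : ℕ ↦ (k + 1) * (2 * k + 1) * a (k + 1) * w ^ k)
      (2 * (w * powerSum (derivSeq (derivSeq a)) w) + powerSum (derivSeq a) w) := by
  refine (((ha.derivSeq.hasSum_natCast_mul w).mul_left 2).add
    (ha.derivSeq.hasSum w)).congr_fun fun k ↦ ?_
  rw [derivSeq]
  ring

theorem natCast_mul (ha : IsEntireSeq a) : IsEntireSeq fun k ↦ k * a k :=
  fun w ↦ (ha.hasSum_natCast_mul w).summable

end IsEntireSeq

section EvenFunction

variable {𝕜 : Type*} [NontriviallyNormedField 𝕜] {F F' F'' : 𝕜 → 𝕜}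

theorem hasDerivAt_comp_sq (hF : ∀ w, HasDerivAt F (F' w) w) (z : 𝕜) :
    HasDerivAt (fun z ↦ F (z ^ 2)) (2 * z * F' (z ^ 2)) z := by
  simpa [Function.comp_def, mul_comm] using (hF (z ^ 2)).comp z (hasDerivAt_pow 2 z)

theorem deriv_comp_sq (hF : ∀ w, HasDerivAt F (F' w) w) :
    deriv (fun z ↦ F (z ^ 2)) = fun z ↦ 2 * z * F' (z ^ 2) :=
  funext fun z ↦ (hasDerivAt_comp_sq hF z).deriv

theorem deriv_deriv_comp_sq (hF : ∀ w, HasDerivAt F (F' w) w)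
    (hF' : ∀ w, HasDerivAt F' (F'' w) w) (z : 𝕜) :
    deriv (deriv fun z ↦ F (z ^ 2)) z = 2 * F' (z ^ 2) + 4 * z ^ 2 * F'' (z ^ 2) := by
  have hlin : HasDerivAt (fun z : 𝕜 ↦ 2 * z) 2 z := by
    simpa using (hasDerivAt_id z).const_mul (2 : 𝕜)
  rw [deriv_comp_sq hF, (hlin.fun_mul (hasDerivAt_comp_sq hF' z)).deriv]
  ring

end EvenFunction

/-- The recurrence equivalent to `∑ c k * z ^ (2 * k)` being a formal solution of the
`X₂⁽¹⁾`-Hermite equation with complex parameter `l`, after multiplication by `1 + 2 * z ^ 2`. -/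
structure IsX2HermiteRec (l : ℂ) (c : ℕ → ℂ) : Prop where
  one : c 1 + l * c 0 = 0
  add_two (k : ℕ) :
    (k + 2) * (2 * k + 3) * c (k + 2) + (2 * (k + 1) * (2 * k + 1) - 10 * (k + 1) + l) * c (k + 1)
      + (2 * l - 4 * k) * c k = 0

namespace IsX2HermiteRec

variable {l : ℂ} {c : ℕ → ℂ}

theorem powerSum_eq (hrec : IsX2HermiteRec l c) (hc : IsEntireSeq c) (w : ℂ) :
    (1 + 2 * w) * (2 * w * powerSum (derivSeq (derivSeq c)) w + powerSum (derivSeq c) w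
      - 2 * w * powerSum (derivSeq c) w + l * powerSum c w)
      = 8 * w * powerSum (derivSeq c) w := by
  set F := powerSum c w
  set F' := powerSum (derivSeq c) w
  set F'' := powerSum (derivSeq (derivSeq c)) w
  have hF : HasSum (fun k ↦ c k * w ^ k) F := hc.hasSum w
  have hwF' : HasSum (fun k : ℕ ↦ k * c k * w ^ k) (w * F') := hc.hasSum_natCast_mul w
  have hG : HasSum (fun k : ℕ ↦ (k + 1) * (2 * k + 1) * c (k + 1) * w ^ k) (2 * (w * F'') + F') :=
    hc.hasSum_add_one_mul_two_mul_add_one w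
  have hwG : HasSum (fun k : ℕ ↦ k * (2 * k - 1) * c k * w ^ k) (w * (2 * (w * F'') + F')) := by
    refine hasSum_mul_pow_of_hasSum_succ (by simp) (hG.congr_fun fun k ↦ ?_)
    push_cast
    ring
  let t (k : ℕ) : ℂ :=
    (k + 1) * (2 * k + 1) * c (k + 1) + (2 * k * (2 * k - 1) - 10 * k + l) * c k
  have ht : HasSum (fun k ↦ t k * w ^ k)
      (2 * (w * F'') + F' + 2 * (w * (2 * (w * F'') + F')) - 10 * (w * F') + l * F) := by
    refine (((hG.add (hwG.mul_left 2)).sub (hwF'.mul_left 10)).add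
      (hF.mul_left l)).congr_fun fun k ↦ ?_
    simp only [t]
    ring
  have hu : HasSum (fun k ↦ t (k + 1) * w ^ k) (4 * (w * F') - 2 * l * F) := by
    refine ((hwF'.mul_left 4).sub (hF.mul_left (2 * l))).congr_fun fun k ↦ ?_
    simp only [t]
    push_cast
    linear_combination w ^ k * hrec.add_two k
  have ht₀ : t 0 = 0 := by simpa [t] using hrec.one
  linear_combination ht.unique (hasSum_mul_pow_of_hasSum_succ ht₀ hu)

theorem deriv_deriv_add_eq_zero (hrec : IsX2HermiteRec l c) (hc : IsEntireSeq c) {z : ℂ}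
    (hz : 1 + 2 * z ^ 2 ≠ 0) :
    deriv (deriv fun z ↦ powerSum c (z ^ 2)) z
      - 2 * (z + 4 * z / (1 + 2 * z ^ 2)) * deriv (fun z ↦ powerSum c (z ^ 2)) z
      + 2 * l * powerSum c (z ^ 2) = 0 := by
  rw [deriv_deriv_comp_sq hc.hasDerivAt hc.derivSeq.hasDerivAt, deriv_comp_sq hc.hasDerivAt]
  field_simp
  linear_combination 2 * hrec.powerSum_eq hc (z ^ 2)

end IsX2HermiteRec

/-- What remains of `x2HermiteCoeff l (k + 2)` without its factors `l` and `l - ((2k + 3)² + 1)`.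
Unlike the coefficients, it satisfies a two-term recurrence. -/
noncomputable def x2HermiteWeight (l : ℂ) (k : ℕ) : ℂ :=
  (-2) ^ (k + 2) * (∏ j ∈ range k, (l - 2 * (j + 2))) / (2 * k + 4).factorial

/-- The coefficients `c_{2k}` with the parameter `n` replaced by a complex number `l`, indexed so
that the product over `1 ≤ j ≤ k - 2` runs over `range (k - 2)`. -/
noncomputable def x2HermiteCoeff (l : ℂ) : ℕ → ℂ
  | 0 => 1
  | 1 => -l
  | k + 2 => l * (l - ((2 * k + 3) ^ 2 + 1)) * x2HermiteWeight l k

/-- The function `μ` with the parameter `n` replaced by a complex number `l`. -/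
noncomputable def x2HermiteEven (l z : ℂ) : ℂ :=
  ∑' k, x2HermiteCoeff l k * z ^ (2 * k)

theorem ceven_eq_x2HermiteCoeff (n k : ℕ) : ceven n k = x2HermiteCoeff n k := by
  match k with
  | 0 => simp [ceven, x2HermiteCoeff]
  | 1 => simp [ceven, x2HermiteCoeff]
  | k + 2 =>
    have hprod : ∏ j ∈ Icc 1 k, ((n : ℂ) - 2 * (1 + j))
        = ∏ j ∈ range k, ((n : ℂ) - 2 * (j + 2)) := by
      rw [← Ico_add_one_right_eq_Icc, prod_Ico_eq_prod_range]
      refine prod_congr (by simp) fun j _ ↦ ?_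
      push_cast
      ring
    rw [ceven, if_neg (by omega), if_neg (by omega), Nat.add_sub_cancel, hprod, x2HermiteCoeff,
      x2HermiteWeight, ← mul_pow, mul_add]
    push_cast
    ring

theorem muF_eq_x2HermiteEven (n : ℕ) : muF n = x2HermiteEven n := by
  ext z
  simp only [muF, x2HermiteEven, ceven_eq_x2HermiteCoeff]

theorem x2HermiteEven_eq_powerSum_sq (l : ℂ) :
    x2HermiteEven l = fun z ↦ powerSum (x2HermiteCoeff l) (z ^ 2) := by
  ext z
  simp only [x2HermiteEven, powerSum, pow_mul]

theorem x2HermiteWeight_zero (l : ℂ) : x2HermiteWeight l 0 = 1 / 6 := by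
  norm_num [x2HermiteWeight, Nat.factorial]

theorem mul_x2HermiteWeight_succ (l : ℂ) (k : ℕ) :
    (2 * k + 6) * (2 * k + 5) * x2HermiteWeight l (k + 1)
      = -2 * (l - 2 * (k + 2)) * x2HermiteWeight l k := by
  have h5 : (2 * k + 5 : ℂ) ≠ 0 := by norm_cast
  have h6 : (2 * k + 6 : ℂ) ≠ 0 := by norm_cast
  have hfac : ((2 * (k + 1) + 4).factorial : ℂ)
      = (2 * k + 6) * (2 * k + 5) * (2 * k + 4).factorial := by
    rw [show 2 * (k + 1) + 4 = 2 * k + 4 + 1 + 1 by ring]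
    simp only [Nat.factorial_succ]
    push_cast
    ring
  rw [x2HermiteWeight, x2HermiteWeight, hfac, prod_range_succ]
  field_simp
  ring

theorem isX2HermiteRec_x2HermiteCoeff (l : ℂ) : IsX2HermiteRec l (x2HermiteCoeff l) where
  one := by simp [x2HermiteCoeff]
  add_two
    | 0 => by
      simp only [x2HermiteCoeff, x2HermiteWeight_zero]
      push_cast
      ring
    | 1 => by
      have hw := mul_x2HermiteWeight_succ l 0
      simp only [x2HermiteCoeff, x2HermiteWeight_zero] at hw ⊢
      push_cast at hw ⊢
      linear_combination l / 2 * (l - 26) * hw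
    | k + 2 => by
      have hw₁ := mul_x2HermiteWeight_succ l k
      have hw₂ := mul_x2HermiteWeight_succ l (k + 1)
      simp only [x2HermiteCoeff]
      push_cast at hw₂ ⊢
      linear_combination l / 2 * (l - ((2 * k + 7) ^ 2 + 1)) * hw₂
        + l * (l - ((2 * k + 3) ^ 2 + 1)) * hw₁

theorem tendsto_inv_two_mul_add (m : ℕ) :
    Tendsto (fun k : ℕ ↦ (2 * k + m : ℂ)⁻¹) atTop (𝓝 0) := by
  have hindex : Tendsto (fun k : ℕ ↦ 2 * k + m) atTop atTop :=
    tendsto_atTop_mono (fun k ↦ show k ≤ 2 * k + m by omega) tendsto_id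
  simpa [Function.comp_def] using (tendsto_inv_atTop_nhds_zero_nat (𝕜 := ℂ)).comp hindex

theorem isEntireSeq_x2HermiteWeight (l : ℂ) : IsEntireSeq (x2HermiteWeight l) := by
  refine isEntireSeq_of_tendsto_ratio
    (ρ := fun k ↦ -2 * (l + 1) * ((2 * k + 6 : ℂ)⁻¹ * (2 * k + 5 : ℂ)⁻¹) + 2 * (2 * k + 6 : ℂ)⁻¹)
    (fun k ↦ ?_) ?_
  · have h5 : (2 * k + 5 : ℂ) ≠ 0 := by norm_cast
    have h6 : (2 * k + 6 : ℂ) ≠ 0 := by norm_cast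
    field_simp
    linear_combination mul_x2HermiteWeight_succ l k
  · have h5 := tendsto_inv_two_mul_add 5
    have h6 := tendsto_inv_two_mul_add 6
    simpa using ((h6.mul h5).const_mul (-2 * (l + 1))).add (h6.const_mul 2)

theorem isEntireSeq_x2HermiteCoeff (l : ℂ) : IsEntireSeq (x2HermiteCoeff l) := by
  refine IsEntireSeq.of_succ (IsEntireSeq.of_succ ?_)
  have h₀ := isEntireSeq_x2HermiteWeight l
  have hcombo := ((h₀.const_mul (l * (l - 10))).sub (h₀.natCast_mul.const_mul (12 * l))).sub
    (h₀.natCast_mul.natCast_mul.const_mul (4 * l))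
  convert hcombo using 2 with k
  rw [x2HermiteCoeff]
  ring

theorem stmt8_general (l z : ℂ) (hz : 1 + 2 * z ^ 2 ≠ 0) :
    deriv (deriv (x2HermiteEven l)) z
      - 2 * (z + 4 * z / (1 + 2 * z ^ 2)) * deriv (x2HermiteEven l) z
      + 2 * l * x2HermiteEven l z = 0 := by
  rw [x2HermiteEven_eq_powerSum_sq]
  exact (isX2HermiteRec_x2HermiteCoeff l).deriv_deriv_add_eq_zero (isEntireSeq_x2HermiteCoeff l) hz

theorem stmt8 (n : ℕ) (z : ℂ) (hz : 1 + 2 * z ^ 2 ≠ 0) :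
    deriv (deriv (muF n)) z
      - 2 * (z + 4 * z / (1 + 2 * z ^ 2)) * deriv (muF n) z
      + 2 * (n : ℂ) * muF n z = 0 := by
  rw [muF_eq_x2HermiteEven]
  exact stmt8_general n z hz
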